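/- arXiv:1212.4512 — 4 statements merged into one kernel-verified Lean document; each statement's English description precedes it below -/
import Mathlib

section
/- The chord-averaging operator T of the hit-and-run chain is self-adjoint on L₂(μ): for all bounded measurable g₁, g₂ : K × S^{d-1} → ℝ, ⟨Tg₁, g₂⟩_μ = ⟨g₁, Tg₂⟩_μ, where ⟨g₁,g₂⟩_μ = κ_d^{-1} ∫_K ∫_{S^{d-1}} g₁(x,θ) g₂(x,θ) dθ dπ(x) and Tg(x,θ) = ℓ(x,θ)^{-1} ∫_{L(x,θ)} g(y,θ) ρ(y) dy. -/
open MeasureTheory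

/-- The total chord weight `ℓ(x,θ)`, as the line integral `∫_ℝ 1_K(x+sθ) ρ(x+sθ) ds`. -/
noncomputable def chordWeight {d : ℕ} (K : Set (EuclideanSpace ℝ (Fin d)))
    (ρ : EuclideanSpace ℝ (Fin d) → ℝ) (x θ : EuclideanSpace ℝ (Fin d)) : ℝ :=
  ∫ s : ℝ, Set.indicator K ρ (x + s • θ)

/-- The chord-averaging operator of the hit-and-run chain:
`T g (x,θ) = ℓ(x,θ)⁻¹ ∫_{L(x,θ)} g(y,θ) ρ(y) dy`. -/
noncomputable def harT {d : ℕ} (K : Set (EuclideanSpace ℝ (Fin d)))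
    (ρ : EuclideanSpace ℝ (Fin d) → ℝ)
    (g : EuclideanSpace ℝ (Fin d) → EuclideanSpace ℝ (Fin d) → ℝ)
    (x θ : EuclideanSpace ℝ (Fin d)) : ℝ :=
  (chordWeight K ρ x θ)⁻¹ *
    ∫ s : ℝ, Set.indicator K (fun y => g y θ * ρ y) (x + s • θ)

/-- The surface measure on the unit sphere `S^{d-1} ⊂ ℝ^d`, realized as the
`(d-1)`-dimensional Hausdorff measure restricted to the sphere. -/
noncomputable def sphereMeasure (d : ℕ) : Measure (EuclideanSpace ℝ (Fin d)) :=
  (μH[(d : ℝ) - 1]).restrict (Metric.sphere (0 : EuclideanSpace ℝ (Fin d)) 1)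

/-- `κ_d`, the total surface measure of the unit sphere `S^{d-1}`. -/
noncomputable def kappa (d : ℕ) : ℝ := (sphereMeasure d Set.univ).toReal

/-- The probability measure `π` on `K` with density `ρ / ∫_K ρ` w.r.t. Lebesgue measure. -/
noncomputable def piMeasure {d : ℕ} (K : Set (EuclideanSpace ℝ (Fin d)))
    (ρ : EuclideanSpace ℝ (Fin d) → ℝ) : Measure (EuclideanSpace ℝ (Fin d)) :=
  (∫⁻ x in K, ENNReal.ofReal (ρ x))⁻¹ •
    ((volume.restrict K).withDensity fun x => ENNReal.ofReal (ρ x))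


section helpers

variable {E : Type*} [NormedAddCommGroup E] [NormedSpace ℝ E] [MeasurableSpace E] [BorelSpace E]

lemma aux_weight_shift (r : E → ℝ) (θ x : E) (t : ℝ) :
    ∫ s : ℝ, r (x + t • θ + s • θ) = ∫ s : ℝ, r (x + s • θ) := by
  rw [← integral_add_left_eq_self (fun s : ℝ => r (x + s • θ)) t]
  congr 1
  ext s
  rw [add_smul, add_assoc]

lemma aux_bound (r : E → ℝ) (hr0 : ∀ y, 0 ≤ r y) (a : E → ℝ) (C : ℝ)
    (ha : ∀ y, |a y| ≤ C) (θ x : E) :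
    |(∫ s : ℝ, r (x + s • θ))⁻¹ * ∫ s : ℝ, a (x + s • θ) * r (x + s • θ)| ≤ C := by
  have hC : 0 ≤ C := (abs_nonneg _).trans (ha x)
  by_cases hi : Integrable (fun s : ℝ => r (x + s • θ))
  · have hL : 0 ≤ ∫ s : ℝ, r (x + s • θ) := integral_nonneg fun s => hr0 _
    have h1 : |∫ s : ℝ, a (x + s • θ) * r (x + s • θ)| ≤ C * ∫ s : ℝ, r (x + s • θ) := by
      rw [← integral_const_mul, ← Real.norm_eq_abs]
      refine norm_integral_le_of_norm_le (hi.const_mul C) (Filter.Eventually.of_forall fun s => ?_)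
      rw [Real.norm_eq_abs, abs_mul, abs_of_nonneg (hr0 _)]
      exact mul_le_mul_of_nonneg_right (ha _) (hr0 _)
    rw [abs_mul, abs_inv, abs_of_nonneg hL]
    calc _ ≤ (∫ s : ℝ, r (x + s • θ))⁻¹ * (C * ∫ s : ℝ, r (x + s • θ)) :=
          mul_le_mul_of_nonneg_left h1 (inv_nonneg.2 hL)
      _ = C * ((∫ s : ℝ, r (x + s • θ))⁻¹ * ∫ s : ℝ, r (x + s • θ)) := by ring
      _ ≤ C * 1 := mul_le_mul_of_nonneg_left inv_mul_le_one hC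
      _ = C := mul_one C
  · rw [integral_undef hi]
    simpa using hC

variable [SecondCountableTopology E]

lemma aux_meas_weight (r : E → ℝ) (hr : Measurable r) (θ : E) :
    Measurable fun x => ∫ s : ℝ, r (x + s • θ) := by
  have : StronglyMeasurable (fun p : E × ℝ => r (p.1 + p.2 • θ)) :=
    (hr.comp (by fun_prop)).stronglyMeasurable
  exact this.integral_prod_right.measurable

lemma aux_integrable (μ : Measure E) [SFinite μ]
    (r : E → ℝ) (hr0 : ∀ y, 0 ≤ r y) (hr : Measurable r)
    (hri : Integrable r μ) (a b : E → ℝ) (ham : Measurable a) (hbm : Measurable b)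
    (A B : ℝ) (ha : ∀ y, |a y| ≤ A) (hb : ∀ y, |b y| ≤ B) (θ : E) :
    Integrable (fun p : E × ℝ => r p.1 * (∫ s : ℝ, r (p.1 + s • θ))⁻¹ *
      (a (p.1 + p.2 • θ) * r (p.1 + p.2 • θ)) * b p.1) (μ.prod volume) := by
  have hL := aux_meas_weight r hr θ
  have hsh : Measurable (fun p : E × ℝ => p.1 + p.2 • θ) := by fun_prop
  have hm : Measurable (fun p : E × ℝ => r p.1 * (∫ s : ℝ, r (p.1 + s • θ))⁻¹ *
      (a (p.1 + p.2 • θ) * r (p.1 + p.2 • θ)) * b p.1) :=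
    (((hr.comp measurable_fst).mul (hL.comp measurable_fst).inv).mul
      ((ham.comp hsh).mul (hr.comp hsh))).mul (hbm.comp measurable_fst)
  have hA : ∀ x : E, 0 ≤ A := fun x => (abs_nonneg _).trans (ha x)
  rw [integrable_prod_iff hm.aestronglyMeasurable]
  refine ⟨Filter.Eventually.of_forall fun x => ?_, ?_⟩
  · by_cases hi : Integrable (fun s : ℝ => r (x + s • θ))
    · have hx : Measurable (fun s : ℝ => x + s • θ) := by fun_prop
      have h3 : Integrable (fun s : ℝ => a (x + s • θ) * r (x + s • θ)) :=
        Integrable.bdd_mul (c := A) hi (ham.comp hx).aestronglyMeasurable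
          (Filter.Eventually.of_forall fun s => ha _)
      exact (h3.const_mul (r x * (∫ s : ℝ, r (x + s • θ))⁻¹)).mul_const (b x)
    · simp only [integral_undef hi]
      simp
  · refine Integrable.mono' (hri.const_mul (A * B))
      hm.stronglyMeasurable.norm.integral_prod_right.aestronglyMeasurable
      (Filter.Eventually.of_forall fun x => ?_)
    have hL0 : 0 ≤ ∫ s : ℝ, r (x + s • θ) := integral_nonneg fun s => hr0 _
    have e : ∀ s : ℝ, ‖r x * (∫ s : ℝ, r (x + s • θ))⁻¹ *
      (a (x + s • θ) * r (x + s • θ)) * b x‖ =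
        (r x * |b x| * (∫ s : ℝ, r (x + s • θ))⁻¹) * (|a (x + s • θ)| * r (x + s • θ)) := by
      intro s
      rw [Real.norm_eq_abs, abs_mul, abs_mul, abs_mul, abs_mul, abs_inv, abs_of_nonneg hL0,
        abs_of_nonneg (hr0 _), abs_of_nonneg (hr0 _)]
      ring
    simp only [e]
    rw [integral_const_mul, Real.norm_eq_abs, mul_assoc, abs_mul]
    have h1 := aux_bound r hr0 (fun y => |a y|) A (fun y => by rw [abs_abs]; exact ha y) θ x
    have h2 : |r x * abs (b x)| ≤ r x * B := by
      rw [abs_mul, abs_abs, abs_of_nonneg (hr0 x)]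
      exact mul_le_mul_of_nonneg_left (hb x) (hr0 x)
    calc _ ≤ (r x * B) * A :=
          mul_le_mul h2 h1 (abs_nonneg _) ((abs_nonneg _).trans h2)
      _ = A * B * r x := by ring

lemma aux_key (μ : Measure E) [SFinite μ] [μ.IsAddRightInvariant]
    (r : E → ℝ) (hr0 : ∀ y, 0 ≤ r y) (hr : Measurable r)
    (hri : Integrable r μ) (a b : E → ℝ) (ham : Measurable a) (hbm : Measurable b)
    (A B : ℝ) (ha : ∀ y, |a y| ≤ A) (hb : ∀ y, |b y| ≤ B) (θ : E) :
    ∫ x, r x * (((∫ s : ℝ, r (x + s • θ))⁻¹ * ∫ s : ℝ, a (x + s • θ) * r (x + s • θ)) * b x) ∂μ =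
    ∫ x, r x * (a x * ((∫ s : ℝ, r (x + s • θ))⁻¹ *
      ∫ s : ℝ, b (x + s • θ) * r (x + s • θ))) ∂μ := by
  have I1 := aux_integrable μ r hr0 hr hri a b ham hbm A B ha hb θ
  have I2 := aux_integrable μ r hr0 hr hri b a hbm ham B A hb ha θ
  have e1 : ∀ x, r x * (((∫ s : ℝ, r (x + s • θ))⁻¹ *
      ∫ s : ℝ, a (x + s • θ) * r (x + s • θ)) * b x) =
      ∫ t : ℝ, r x * (∫ s : ℝ, r (x + s • θ))⁻¹ * (a (x + t • θ) * r (x + t • θ)) * b x := by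
    intro x
    rw [integral_mul_const, integral_const_mul]
    ring
  have e2 : ∀ x, r x * (a x * ((∫ s : ℝ, r (x + s • θ))⁻¹ *
      ∫ s : ℝ, b (x + s • θ) * r (x + s • θ))) =
      ∫ t : ℝ, r x * (∫ s : ℝ, r (x + s • θ))⁻¹ * (b (x + t • θ) * r (x + t • θ)) * a x := by
    intro x
    rw [integral_mul_const, integral_const_mul]
    ring
  simp only [e1, e2]
  refine (integral_integral_swap I1).trans (Eq.trans ?_ (integral_integral_swap I2).symm)
  rw [← integral_neg_eq_self (fun t : ℝ => ∫ x, r x * (∫ s : ℝ, r (x + s • θ))⁻¹ *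
    (b (x + t • θ) * r (x + t • θ)) * a x ∂μ)]
  congr 1
  ext t
  rw [← integral_add_right_eq_self (fun x => r x * (∫ s : ℝ, r (x + s • θ))⁻¹ *
    (b (x + (-t) • θ) * r (x + (-t) • θ)) * a x) (t • θ)]
  congr 1
  ext x
  rw [aux_weight_shift, neg_smul, add_neg_cancel_right]
  ring

end helpers

lemma harT_eq {d : ℕ} (K : Set (EuclideanSpace ℝ (Fin d)))
    (ρ : EuclideanSpace ℝ (Fin d) → ℝ)
    (g : EuclideanSpace ℝ (Fin d) → EuclideanSpace ℝ (Fin d) → ℝ)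
    (x θ : EuclideanSpace ℝ (Fin d)) :
    harT K ρ g x θ = (∫ s : ℝ, K.indicator ρ (x + s • θ))⁻¹ *
      ∫ s : ℝ, g (x + s • θ) θ * K.indicator ρ (x + s • θ) := by
  unfold harT chordWeight
  congr 2
  ext s
  by_cases h : x + s • θ ∈ K <;> simp [h]

lemma harT_meas {d : ℕ} (K : Set (EuclideanSpace ℝ (Fin d)))
    (hK : MeasurableSet K) (ρ : EuclideanSpace ℝ (Fin d) → ℝ) (hρ : Measurable ρ)
    (g : EuclideanSpace ℝ (Fin d) → EuclideanSpace ℝ (Fin d) → ℝ)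
    (hg : Measurable fun p : EuclideanSpace ℝ (Fin d) × EuclideanSpace ℝ (Fin d) => g p.1 p.2) :
    Measurable fun p : EuclideanSpace ℝ (Fin d) × EuclideanSpace ℝ (Fin d) =>
      harT K ρ g p.1 p.2 := by
  simp only [harT_eq]
  have hr := hρ.indicator hK
  have hsh : Measurable (fun p : (EuclideanSpace ℝ (Fin d) × EuclideanSpace ℝ (Fin d)) × ℝ =>
    p.1.1 + p.2 • p.1.2) := by fun_prop
  have h2 : Measurable (fun p : (EuclideanSpace ℝ (Fin d) × EuclideanSpace ℝ (Fin d)) × ℝ =>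
    p.1.2) := by fun_prop
  have m1 := (hr.comp hsh).stronglyMeasurable.integral_prod_right' (ν := volume)
  have m2 := ((hg.comp (hsh.prodMk h2)).mul (hr.comp hsh)).stronglyMeasurable.integral_prod_right'
    (ν := volume)
  exact m1.measurable.inv.mul m2.measurable

lemma integral_piMeasure {d : ℕ} (K : Set (EuclideanSpace ℝ (Fin d)))
    (hK : MeasurableSet K) (ρ : EuclideanSpace ℝ (Fin d) → ℝ) (hρ0 : ∀ y, 0 ≤ ρ y)
    (hρ : Measurable ρ) (f : EuclideanSpace ℝ (Fin d) → ℝ) :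
    ∫ x, f x ∂(piMeasure K ρ) = ((∫⁻ x in K, ENNReal.ofReal (ρ x))⁻¹).toReal *
      ∫ x, K.indicator ρ x * f x := by
  unfold piMeasure
  rw [integral_smul_measure, integral_withDensity_eq_integral_toReal_smul
    hρ.ennreal_ofReal (Filter.Eventually.of_forall fun x => ENNReal.ofReal_lt_top),
    ← integral_indicator hK, smul_eq_mul]
  congr 2
  ext x
  by_cases h : x ∈ K <;> simp [h, hρ0 x]

/-- The chord-averaging operator `T` of the hit-and-run chain is
self-adjoint on `L₂(μ)`: for all bounded measurable `g₁, g₂`,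
`⟨Tg₁, g₂⟩_μ = ⟨g₁, Tg₂⟩_μ`, where
`⟨g₁,g₂⟩_μ = κ_d⁻¹ ∫_K ∫_{S^{d-1}} g₁(x,θ) g₂(x,θ) dθ dπ(x)`. -/
theorem harT_selfAdjoint {d : ℕ} (K : Set (EuclideanSpace ℝ (Fin d)))
    (hK : MeasurableSet K) (hKint : (interior K).Nonempty)
    (ρ : EuclideanSpace ℝ (Fin d) → ℝ) (hρ0 : ∀ y, 0 ≤ ρ y)
    (hρmeas : Measurable ρ) (hρint : IntegrableOn ρ K volume)
    (hρpos : 0 < ∫ x in K, ρ x)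
    (hℓ : ∀ᵐ x ∂(piMeasure K ρ), ∀ᵐ θ ∂(sphereMeasure d),
      0 < chordWeight K ρ x θ ∧
        Integrable (fun s : ℝ => Set.indicator K ρ (x + s • θ)) volume)
    (g₁ g₂ : EuclideanSpace ℝ (Fin d) → EuclideanSpace ℝ (Fin d) → ℝ)
    (hg₁meas : Measurable fun p : EuclideanSpace ℝ (Fin d) × EuclideanSpace ℝ (Fin d) =>
      g₁ p.1 p.2)
    (hg₂meas : Measurable fun p : EuclideanSpace ℝ (Fin d) × EuclideanSpace ℝ (Fin d) =>
      g₂ p.1 p.2)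
    (hg₁bd : ∃ C : ℝ, ∀ y η, |g₁ y η| ≤ C)
    (hg₂bd : ∃ C : ℝ, ∀ y η, |g₂ y η| ≤ C) :
    (kappa d)⁻¹ *
        ∫ x, (∫ θ, harT K ρ g₁ x θ * g₂ x θ ∂(sphereMeasure d)) ∂(piMeasure K ρ) =
      (kappa d)⁻¹ *
        ∫ x, (∫ θ, g₁ x θ * harT K ρ g₂ x θ ∂(sphereMeasure d)) ∂(piMeasure K ρ) := by
  by_cases hfin : sphereMeasure d Set.univ = ⊤
  · simp [kappa, hfin]
  have : IsFiniteMeasure (sphereMeasure d) := ⟨lt_top_iff_ne_top.2 hfin⟩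
  have : IsFiniteMeasure (piMeasure K ρ) := by
    have h0 : ∫⁻ x in K, ENNReal.ofReal (ρ x) ≠ 0 := by
      rw [← ofReal_integral_eq_lintegral_ofReal hρint (Filter.Eventually.of_forall hρ0)]
      simpa using hρpos
    constructor
    unfold piMeasure
    rw [Measure.smul_apply, withDensity_apply _ MeasurableSet.univ, Measure.restrict_univ,
      smul_eq_mul]
    exact ENNReal.mul_lt_top (ENNReal.inv_lt_top.2 (pos_iff_ne_zero.2 h0)) hρint.lintegral_lt_top
  obtain ⟨A, hA⟩ := hg₁bd
  obtain ⟨B, hB⟩ := hg₂bd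
  have hr0 : ∀ y, 0 ≤ K.indicator ρ y := fun y => Set.indicator_nonneg (fun y _ => hρ0 y) y
  have hr := hρmeas.indicator hK
  have hri : Integrable (K.indicator ρ) := (integrable_indicator_iff hK).2 hρint
  have m1 := harT_meas K hK ρ hρmeas g₁ hg₁meas
  have m2 := harT_meas K hK ρ hρmeas g₂ hg₂meas
  have b1 : ∀ x θ, |harT K ρ g₁ x θ| ≤ A := fun x θ => by
    rw [harT_eq]
    exact aux_bound _ hr0 (fun y => g₁ y θ) A (fun y => hA y θ) θ x
  have b2 : ∀ x θ, |harT K ρ g₂ x θ| ≤ B := fun x θ => by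
    rw [harT_eq]
    exact aux_bound _ hr0 (fun y => g₂ y θ) B (fun y => hB y θ) θ x
  have I1 : Integrable (fun p : EuclideanSpace ℝ (Fin d) × EuclideanSpace ℝ (Fin d) =>
      harT K ρ g₁ p.1 p.2 * g₂ p.1 p.2) ((piMeasure K ρ).prod (sphereMeasure d)) := by
    refine Integrable.of_bound (m1.mul hg₂meas).aestronglyMeasurable (A * B)
      (Filter.Eventually.of_forall fun p => ?_)
    rw [Real.norm_eq_abs, abs_mul]
    exact mul_le_mul (b1 _ _) (hB _ _) (abs_nonneg _) ((abs_nonneg _).trans (b1 p.1 p.2))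
  have I2 : Integrable (fun p : EuclideanSpace ℝ (Fin d) × EuclideanSpace ℝ (Fin d) =>
      g₁ p.1 p.2 * harT K ρ g₂ p.1 p.2) ((piMeasure K ρ).prod (sphereMeasure d)) := by
    refine Integrable.of_bound (hg₁meas.mul m2).aestronglyMeasurable (A * B)
      (Filter.Eventually.of_forall fun p => ?_)
    rw [Real.norm_eq_abs, abs_mul]
    exact mul_le_mul (hA _ _) (b2 _ _) (abs_nonneg _) ((abs_nonneg _).trans (b1 p.1 p.2))
  congr 1
  refine (integral_integral_swap I1).trans (Eq.trans ?_ (integral_integral_swap I2).symm)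
  congr 1
  ext θ
  rw [integral_piMeasure K hK ρ hρ0 hρmeas, integral_piMeasure K hK ρ hρ0 hρmeas]
  congr 1
  simp only [harT_eq]
  exact aux_key volume _ hr0 hr hri (fun y => g₁ y θ) (fun y => g₂ y θ)
    (hg₁meas.comp (measurable_id.prodMk measurable_const))
    (hg₂meas.comp (measurable_id.prodMk measurable_const)) A B
    (fun y => hA y θ) (fun y => hB y θ) θ
end

section
/- The Markov operator H of the hit-and-run algorithm is positive on L₂(π): for every bounded measurable f : K → ℝ, ⟨Hf, f⟩_π = ∫_K Hf(x) f(x) dπ(x) ≥ 0, where Hf(x) = κ_d^{-1} ∫_{S^{d-1}} ℓ(x,θ)^{-1} ∫_{L(x,θ)} f(y) ρ(y) dy dθ. -/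
open MeasureTheory

/-- The Markov operator of the hit-and-run algorithm:
`H f (x) = κ_d⁻¹ ∫_{S^{d-1}} ℓ(x,θ)⁻¹ ∫_{L(x,θ)} f(y) ρ(y) dy dθ`, the chord integral
being the line integral `∫_ℝ 1_K(x+sθ) f(x+sθ) ρ(x+sθ) ds`. -/
noncomputable def hitAndRun {d : ℕ} (K : Set (EuclideanSpace ℝ (Fin d)))
    (ρ : EuclideanSpace ℝ (Fin d) → ℝ) (f : EuclideanSpace ℝ (Fin d) → ℝ)
    (x : EuclideanSpace ℝ (Fin d)) : ℝ :=
  (kappa d)⁻¹ * ∫ θ, ((chordWeight K ρ x θ)⁻¹ *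
    ∫ s : ℝ, Set.indicator K (fun y => f y * ρ y) (x + s • θ)) ∂(sphereMeasure d)

open MeasureTheory

/-- Integration along lines: if all line integrals in direction `θ` are nonnegative, so is the
total integral. -/
lemma integral_nonneg_of_line {d : ℕ} (θ : EuclideanSpace ℝ (Fin d)) (hθ : ‖θ‖ = 1)
    (F : EuclideanSpace ℝ (Fin d) → ℝ) (hFm : Measurable F) (hFi : Integrable F volume)
    (hF : ∀ x, 0 ≤ ∫ s : ℝ, F (x + s • θ)) : 0 ≤ ∫ x, F x := by
  let ψ : ℝ → ℝ := Set.indicator (Set.Icc 0 1) (fun _ => 1)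
  have hψm : Measurable ψ := measurable_const.indicator measurableSet_Icc
  have hψ0 : ∀ t, 0 ≤ ψ t := fun t => Set.indicator_nonneg (fun _ _ => zero_le_one) t
  have hψi : Integrable ψ volume := by
    refine (integrable_indicator_iff measurableSet_Icc).2 ?_
    simp [IntegrableOn]
  have hψ1 : ∫ t, ψ t = 1 := by
    rw [integral_indicator measurableSet_Icc]; simp
  let Φ : ℝ × EuclideanSpace ℝ (Fin d) → ℝ := fun p => F p.2 * ψ (inner ℝ p.2 θ - p.1)
  have hΦm : Measurable Φ := by
    refine (hFm.comp measurable_snd).mul (hψm.comp ?_)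
    fun_prop
  have hΦi : Integrable Φ (volume.prod volume) := by
    rw [integrable_prod_iff' hΦm.aestronglyMeasurable]
    constructor
    · refine Filter.Eventually.of_forall fun x => ?_
      exact (hψi.comp_sub_left (inner ℝ x θ)).const_mul (F x)
    · refine hFi.norm.congr (Filter.Eventually.of_forall fun x => ?_)
      simp only [Φ, norm_mul]
      rw [integral_const_mul]
      have : ∫ s : ℝ, ‖ψ (inner ℝ x θ - s)‖ = 1 := by
        rw [integral_sub_left_eq_self (fun s => ‖ψ s‖) volume (inner ℝ x θ), ← hψ1]
        exact integral_congr_ae (Filter.Eventually.of_forall fun t => Real.norm_of_nonneg (hψ0 t))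
      rw [this, mul_one]
  let T : ℝ × EuclideanSpace ℝ (Fin d) → ℝ × EuclideanSpace ℝ (Fin d) :=
    fun p => (p.1, p.2 + p.1 • θ)
  have hT : MeasurePreserving T (volume.prod volume) (volume.prod volume) := by
    refine MeasurePreserving.skew_product (g := fun s x => x + s • θ)
      (MeasurePreserving.id volume) ?_ ?_
    · fun_prop
    · exact Filter.Eventually.of_forall fun s => map_add_right_eq_self volume (s • θ)
  have hΦT : Integrable (Φ ∘ T) (volume.prod volume) := hT.integrable_comp_of_integrable hΦi
  have e1 : ∫ x, F x = ∫ p, Φ p ∂(volume.prod volume) := by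
    rw [integral_prod_symm _ hΦi]
    refine integral_congr_ae (Filter.Eventually.of_forall fun x => ?_)
    simp only [Φ]
    rw [integral_const_mul, integral_sub_left_eq_self ψ volume (inner ℝ x θ), hψ1, mul_one]
  have e2 : ∫ p, Φ p ∂(volume.prod volume) = ∫ p, (Φ ∘ T) p ∂(volume.prod volume) := by
    conv_lhs => rw [← hT.map_eq]
    rw [integral_map hT.measurable.aemeasurable hΦm.aestronglyMeasurable]
    rfl
  rw [e1, e2, integral_prod_symm _ hΦT]
  refine integral_nonneg fun x => ?_
  have h : ∀ s : ℝ, (Φ ∘ T) (s, x) = F (x + s • θ) * ψ (inner ℝ x θ) := by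
    intro s
    simp [Φ, T, inner_add_left, real_inner_smul_left, hθ]
  simp only [h]
  rw [integral_mul_const]
  exact mul_nonneg (hF x) (hψ0 _)

/-- The Markov operator `H` of the hit-and-run algorithm is positive
on `L₂(π)`: for every bounded measurable `f : K → ℝ`,
`⟨Hf, f⟩_π = ∫_K Hf(x) f(x) dπ(x) ≥ 0`. -/
theorem hitAndRun_positive {d : ℕ} (K : Set (EuclideanSpace ℝ (Fin d)))
    (hK : MeasurableSet K) (hKint : (interior K).Nonempty)
    (ρ : EuclideanSpace ℝ (Fin d) → ℝ) (hρ0 : ∀ y, 0 ≤ ρ y)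
    (hρmeas : Measurable ρ) (hρint : IntegrableOn ρ K volume)
    (hρpos : 0 < ∫ x in K, ρ x)
    (hℓ : ∀ᵐ x ∂(piMeasure K ρ), ∀ᵐ θ ∂(sphereMeasure d),
      0 < chordWeight K ρ x θ ∧
        Integrable (fun s : ℝ => Set.indicator K ρ (x + s • θ)) volume)
    (f : EuclideanSpace ℝ (Fin d) → ℝ)
    (hfmeas : Measurable f) (hfbd : ∃ C : ℝ, ∀ y, |f y| ≤ C) :
    0 ≤ ∫ x, hitAndRun K ρ f x * f x ∂(piMeasure K ρ) := by
  obtain ⟨C, hC⟩ := hfbd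
  have hC0 : 0 ≤ C := (abs_nonneg _).trans (hC 0)
  by_cases hfin : sphereMeasure d Set.univ = ⊤
  · have : kappa d = 0 := by simp [kappa, hfin]
    simp [hitAndRun, this]
  haveI : IsFiniteMeasure (sphereMeasure d) := ⟨lt_top_iff_ne_top.2 hfin⟩
  set r : EuclideanSpace ℝ (Fin d) → ℝ := Set.indicator K ρ with hr
  set h : EuclideanSpace ℝ (Fin d) → ℝ := Set.indicator K (fun y => f y * ρ y) with hh
  have hrm : Measurable r := hρmeas.indicator hK
  have hhm : Measurable h := (hfmeas.mul hρmeas).indicator hK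
  have hr0 : ∀ y, 0 ≤ r y := fun y => Set.indicator_nonneg (fun y _ => hρ0 y) y
  have hri : Integrable r volume := (integrable_indicator_iff hK).2 hρint
  have hfr : ∀ y, h y = f y * r y := by
    intro y; by_cases hy : y ∈ K <;> simp [hr, hh, hy]
  have hhr : ∀ y, |h y| ≤ C * r y := by
    intro y
    rw [hfr, abs_mul, abs_of_nonneg (hr0 y)]
    exact mul_le_mul_of_nonneg_right (hC y) (hr0 y)
  let ℓ : EuclideanSpace ℝ (Fin d) × EuclideanSpace ℝ (Fin d) → ℝ :=
    fun p => ∫ s : ℝ, r (p.1 + s • p.2)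
  let g : EuclideanSpace ℝ (Fin d) × EuclideanSpace ℝ (Fin d) → ℝ :=
    fun p => ∫ s : ℝ, h (p.1 + s • p.2)
  have hline : Measurable (fun q : (EuclideanSpace ℝ (Fin d) × EuclideanSpace ℝ (Fin d)) × ℝ =>
      q.1.1 + q.2 • q.1.2) := by fun_prop
  have hℓm : Measurable ℓ :=
    ((hrm.comp hline).stronglyMeasurable.integral_prod_right').measurable
  have hgm : Measurable g :=
    ((hhm.comp hline).stronglyMeasurable.integral_prod_right').measurable
  have hℓ0 : ∀ p, 0 ≤ ℓ p := fun p => integral_nonneg fun s => hr0 _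
  let A : EuclideanSpace ℝ (Fin d) × EuclideanSpace ℝ (Fin d) → ℝ := fun p => (ℓ p)⁻¹ * g p
  have hAm : Measurable A := hℓm.inv.mul hgm
  have hAb : ∀ p, |A p| ≤ C := by
    intro p
    rcases (hℓ0 p).eq_or_lt with h0 | h0
    · simp [A, ← h0, hC0]
    have hi : Integrable (fun s : ℝ => r (p.1 + s • p.2)) volume := by
      by_contra hn
      exact h0.ne' (integral_undef hn)
    have hg : |g p| ≤ C * ℓ p := by
      have := norm_integral_le_of_norm_le (f := fun s : ℝ => h (p.1 + s • p.2)) (hi.const_mul C)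
        (Filter.Eventually.of_forall fun s => hhr _)
      rwa [integral_const_mul] at this
    simp only [A]
    rw [abs_mul, abs_of_pos (inv_pos.2 h0), inv_mul_le_iff₀ h0]
    linarith
  have hshift : ∀ x θ (t : ℝ), A (x + t • θ, θ) = A (x, θ) := by
    intro x θ t
    have key : ∀ u : EuclideanSpace ℝ (Fin d) → ℝ,
        ∫ s : ℝ, u (x + t • θ + s • θ) = ∫ s : ℝ, u (x + s • θ) := by
      intro u
      rw [← integral_add_left_eq_self (fun s : ℝ => u (x + s • θ)) t]
      simp only [add_smul, add_assoc]
    simp only [A, ℓ, g, key]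
  unfold piMeasure
  rw [integral_smul_measure]
  refine smul_nonneg ENNReal.toReal_nonneg ?_
  set ν := (volume.restrict K).withDensity fun x => ENNReal.ofReal (ρ x) with hν
  haveI : IsFiniteMeasure ν := isFiniteMeasure_withDensity_ofReal hρint.2
  have eH : ∀ x, hitAndRun K ρ f x * f x
      = (kappa d)⁻¹ * ∫ θ, A (x, θ) * f x ∂(sphereMeasure d) := by
    intro x
    rw [integral_mul_const, ← mul_assoc]
    rfl
  simp only [eH]
  rw [integral_const_mul]
  refine mul_nonneg (inv_nonneg.2 ENNReal.toReal_nonneg) ?_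
  have hB : Integrable (fun p : EuclideanSpace ℝ (Fin d) × EuclideanSpace ℝ (Fin d) =>
      A p * f p.1) (ν.prod (sphereMeasure d)) := by
    refine Integrable.of_bound (hAm.mul (hfmeas.comp measurable_fst)).aestronglyMeasurable (C * C)
      (Filter.Eventually.of_forall fun p => ?_)
    rw [Real.norm_eq_abs, abs_mul]
    exact mul_le_mul (hAb p) (hC _) (abs_nonneg _) hC0
  rw [integral_integral_swap hB]
  refine integral_nonneg_of_ae ?_
  have hmem : ∀ᵐ θ ∂(sphereMeasure d), θ ∈ Metric.sphere (0 : EuclideanSpace ℝ (Fin d)) 1 :=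
    ae_restrict_mem Metric.isClosed_sphere.measurableSet
  filter_upwards [hmem] with θ hθ
  have hθ1 : ‖θ‖ = 1 := by simpa using hθ
  have e : ∫ x, A (x, θ) * f x ∂ν = ∫ x, A (x, θ) * h x := by
    rw [hν, integral_withDensity_eq_integral_toReal_smul (by fun_prop)
      (Filter.Eventually.of_forall fun x => ENNReal.ofReal_lt_top), ← integral_indicator hK]
    refine integral_congr_ae (Filter.Eventually.of_forall fun x => ?_)
    by_cases hx : x ∈ K
    · simp only [hh, Set.indicator_of_mem hx, ENNReal.toReal_ofReal (hρ0 x), smul_eq_mul]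
      ring
    · simp [hh, hx]
  have hAθ : Measurable (fun x => A (x, θ)) := hAm.comp (by fun_prop)
  simp only [Pi.zero_apply]
  rw [e]
  refine integral_nonneg_of_line θ hθ1 _ (hAθ.mul hhm) ?_ ?_
  · refine Integrable.mono' ((hri.const_mul C).const_mul C) (hAθ.mul hhm).aestronglyMeasurable
      (Filter.Eventually.of_forall fun x => ?_)
    simp only [Pi.mul_apply, Real.norm_eq_abs, abs_mul]
    exact mul_le_mul (hAb _) (hhr x) (abs_nonneg _) hC0
  · intro x
    simp only [Pi.mul_apply, hshift]
    rw [integral_const_mul]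
    change 0 ≤ (ℓ (x, θ))⁻¹ * g (x, θ) * g (x, θ)
    rw [mul_assoc]
    exact mul_nonneg (inv_nonneg.2 (hℓ0 _)) (mul_self_nonneg _)
end

section
/- The slice-sampler representation of the Metropolis algorithm: with R_t(x,A) = B(x, A ∩ K(t)) + (1 − B(x, K(t))) 1_A(x), the slice sampler operator equals the Metropolis operator, i.e. for every bounded measurable f : K → ℝ and every x ∈ K with ρ(x) > 0, ρ(x)^{-1} ∫_0^{ρ(x)} ∫_{K(t)} f(y) R_t(x,dy) dt = ∫_K f(y) α(x,y) B(x,dy) + (1 − ∫_K α(x,y) B(x,dy)) f(x), where α(x,y) = min(1, ρ(y)/ρ(x)). -/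
open MeasureTheory

/-- The level set `K(t) = {x ∈ K : ρ(x) ≥ t}` of the density `ρ`. -/
def levelSet {d : ℕ} (K : Set (EuclideanSpace ℝ (Fin d)))
    (ρ : EuclideanSpace ℝ (Fin d) → ℝ) (t : ℝ) : Set (EuclideanSpace ℝ (Fin d)) :=
  {x | x ∈ K ∧ t ≤ ρ x}

/-- The kernel `R_t(x,A) = B(x, A ∩ K(t)) + (1 − B(x, K(t))) 1_A(x)`. -/
noncomputable def restrictKernel {d : ℕ}
    (B : EuclideanSpace ℝ (Fin d) → Measure (EuclideanSpace ℝ (Fin d)))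
    (A : Set (EuclideanSpace ℝ (Fin d))) (x : EuclideanSpace ℝ (Fin d)) :
    Measure (EuclideanSpace ℝ (Fin d)) :=
  (B x).restrict A + (1 - B x A) • Measure.dirac x

/-- The slice-sampler representation of the Metropolis algorithm:
with `R_t(x,A) = B(x, A ∩ K(t)) + (1 − B(x, K(t))) 1_A(x)`, the slice sampler
operator equals the Metropolis operator, i.e. for every bounded measurable
`f : K → ℝ` and every `x ∈ K` with `ρ(x) > 0`,
`ρ(x)⁻¹ ∫_0^{ρ(x)} ∫_{K(t)} f(y) R_t(x,dy) dt`
`= ∫_K f(y) α(x,y) B(x,dy) + (1 − ∫_K α(x,y) B(x,dy)) f(x)`,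
where `α(x,y) = min(1, ρ(y)/ρ(x))`. -/
theorem slice_eq_metropolis {d : ℕ}
    (K : Set (EuclideanSpace ℝ (Fin d)))
    (hKbd : Bornology.IsBounded K) (hK : MeasurableSet K)
    (hKint : (interior K).Nonempty)
    (ρ : EuclideanSpace ℝ (Fin d) → ℝ) (hρ0 : ∀ z, 0 ≤ ρ z)
    (hρmeas : Measurable ρ) (hρint : IntegrableOn ρ K volume)
    (B : EuclideanSpace ℝ (Fin d) → Measure (EuclideanSpace ℝ (Fin d)))
    (hBmeas : Measurable B)
    (hBprob : ∀ x, IsProbabilityMeasure (B x))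
    (hBsupp : ∀ x ∈ K, B x Kᶜ = 0)
    (f : EuclideanSpace ℝ (Fin d) → ℝ)
    (hfmeas : Measurable f) (hfbd : ∃ C : ℝ, ∀ y, |f y| ≤ C)
    (x : EuclideanSpace ℝ (Fin d)) (hx : x ∈ K) (hρx : 0 < ρ x) :
    (ρ x)⁻¹ * ∫ t in (0:ℝ)..(ρ x),
        ∫ y in levelSet K ρ t, f y ∂(restrictKernel B (levelSet K ρ t) x) =
      (∫ y, f y * min 1 (ρ y / ρ x) ∂(B x)) +
        (1 - ∫ y, min 1 (ρ y / ρ x) ∂(B x)) * f x := by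
  obtain ⟨C, hC⟩ := hfbd
  haveI := hBprob x
  have hms : ∀ t, MeasurableSet (levelSet K ρ t) := fun t =>
    hK.inter (measurableSet_le measurable_const hρmeas)
  have hae : ∀ᵐ y ∂(B x), y ∈ K := by
    rw [ae_iff]; exact hBsupp x hx
  have hfi : Integrable f (B x) :=
    Integrable.of_bound hfmeas.aestronglyMeasurable C (Filter.Eventually.of_forall hC)
  have hgm : Measurable (fun y => f y - f x) := hfmeas.sub measurable_const
  have hgi : Integrable (fun y => f y - f x) (B x) := hfi.sub (integrable_const _)
  -- the inner integral
  have hinner : ∀ t ∈ Set.Ioc 0 (ρ x),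
      ∫ y in levelSet K ρ t, f y ∂(restrictKernel B (levelSet K ρ t) x) =
        (∫ y, (if t ≤ ρ y then f y - f x else 0) ∂(B x)) + f x := by
    intro t ht
    have hxt : x ∈ levelSet K ρ t := ⟨hx, ht.2⟩
    have h1 : (restrictKernel B (levelSet K ρ t) x).restrict (levelSet K ρ t) =
        (B x).restrict (levelSet K ρ t) + (1 - B x (levelSet K ρ t)) • Measure.dirac x := by
      classical
      rw [restrictKernel, Measure.restrict_add, Measure.restrict_smul,
        Measure.restrict_restrict (hms t), Set.inter_self, restrict_dirac' (hms t), if_pos hxt]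
    have hfd : Integrable f (Measure.dirac x) :=
      Integrable.of_bound hfmeas.aestronglyMeasurable C (Filter.Eventually.of_forall hC)
    rw [h1, integral_add_measure hfi.restrict
      (hfd.smul_measure (ne_top_of_le_ne_top ENNReal.one_ne_top tsub_le_self)),
      integral_smul_measure, integral_dirac]
    have h2 : (∫ y, (if t ≤ ρ y then f y - f x else 0) ∂(B x)) =
        ∫ y in levelSet K ρ t, (f y - f x) ∂(B x) := by
      rw [← integral_indicator (hms t)]
      apply integral_congr_ae
      filter_upwards [hae] with y hy
      by_cases h : t ≤ ρ y
      · rw [if_pos h, Set.indicator_of_mem (show y ∈ levelSet K ρ t from ⟨hy, h⟩)]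
      · rw [if_neg h, Set.indicator_of_notMem (fun h' : y ∈ levelSet K ρ t => h h'.2)]
    rw [h2, integral_sub hfi.restrict (integrable_const _), setIntegral_const,
      ENNReal.toReal_sub_of_le prob_le_one ENNReal.one_ne_top]
    simp only [smul_eq_mul, ENNReal.toReal_one, Measure.real]
    ring
  rw [intervalIntegral.integral_of_le hρx.le, setIntegral_congr_fun measurableSet_Ioc hinner]
  have hFm : Measurable (fun p : ℝ × EuclideanSpace ℝ (Fin d) =>
      if p.1 ≤ ρ p.2 then f p.2 - f x else 0) :=
    Measurable.ite (measurableSet_le measurable_fst (hρmeas.comp measurable_snd))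
      (hgm.comp measurable_snd) measurable_const
  have hFi : Integrable (fun p : ℝ × EuclideanSpace ℝ (Fin d) =>
      if p.1 ≤ ρ p.2 then f p.2 - f x else 0)
      ((volume.restrict (Set.Ioc 0 (ρ x))).prod (B x)) := by
    refine Integrable.of_bound hFm.aestronglyMeasurable (C + C)
      (Filter.Eventually.of_forall fun p => ?_)
    have hC0 : 0 ≤ C := (abs_nonneg _).trans (hC x)
    split_ifs
    · rw [Real.norm_eq_abs]
      exact (abs_sub _ _).trans (add_le_add (hC _) (hC _))
    · simpa using add_nonneg hC0 hC0
  rw [integral_add hFi.integral_prod_left (integrable_const _), integral_integral_swap hFi]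
  have hin : ∀ y, (∫ t in Set.Ioc 0 (ρ x), (if t ≤ ρ y then f y - f x else 0)) =
      ρ x * ((f y - f x) * min 1 (ρ y / ρ x)) := by
    intro y
    have e : (fun t => if t ≤ ρ y then f y - f x else 0) =
        (Set.Iic (ρ y)).indicator (fun _ => f y - f x) := by
      ext t; simp [Set.indicator_apply]
    rw [e, setIntegral_indicator measurableSet_Iic, setIntegral_const, Set.Ioc_inter_Iic,
      Real.volume_real_Ioc_of_le (le_min hρx.le (hρ0 y)), smul_eq_mul, sub_zero]
    have : min (ρ x) (ρ y) = ρ x * min 1 (ρ y / ρ x) := by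
      rw [mul_min_of_nonneg _ _ hρx.le, mul_one, mul_div_cancel₀ _ hρx.ne']
    rw [this]; ring
  simp_rw [hin]
  have hm : Measurable (fun y => min 1 (ρ y / ρ x)) :=
    measurable_const.min (hρmeas.div_const _)
  have hb : ∀ y, ‖min 1 (ρ y / ρ x)‖ ≤ 1 := fun y => by
    rw [Real.norm_of_nonneg (le_min zero_le_one (div_nonneg (hρ0 y) hρx.le))]
    exact min_le_left _ _
  have hai : Integrable (fun y => min 1 (ρ y / ρ x)) (B x) :=
    Integrable.of_bound hm.aestronglyMeasurable 1 (Filter.Eventually.of_forall hb)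
  have hfai : Integrable (fun y => f y * min 1 (ρ y / ρ x)) (B x) :=
    hfi.mul_bdd (c := 1) hm.aestronglyMeasurable (Filter.Eventually.of_forall hb)
  rw [integral_const_mul, setIntegral_const, Real.volume_real_Ioc_of_le hρx.le]
  simp_rw [sub_mul]
  rw [integral_sub hfai (hai.const_mul _), integral_const_mul, smul_eq_mul]
  field_simp
  ring
end

section
/- Positivity of the independent Metropolis algorithm: let B(x,·) = ν(·) for all x ∈ K, where ν is a probability measure on K equal to U_0, the uniform distribution on K. Then the independent Metropolis operator Mf(x) = ∫_K f(y) α(x,y) ν(dy) + (1 − ∫_K α(x,y) ν(dy)) f(x), with α(x,y) = min(1, ρ(y)/ρ(x)), is positive on L₂(π): ∫_K Mf(x) f(x) dπ(x) ≥ 0 for every bounded measurable f : K → ℝ. -/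
open MeasureTheory

/-- The uniform distribution `U_0` on `K`. -/
noncomputable def unifK {d : ℕ} (K : Set (EuclideanSpace ℝ (Fin d))) :
    Measure (EuclideanSpace ℝ (Fin d)) :=
  (volume K)⁻¹ • volume.restrict K

/-- The Markov operator of the independent Metropolis algorithm with constant
proposal `ν = U_0`:
`M f (x) = ∫_K f(y) α(x,y) ν(dy) + (1 − ∫_K α(x,y) ν(dy)) f(x)`, where
`α(x,y) = min(1, ρ(y)/ρ(x))`. -/
noncomputable def indepMetropolisOp {d : ℕ} (K : Set (EuclideanSpace ℝ (Fin d)))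
    (ρ : EuclideanSpace ℝ (Fin d) → ℝ) (f : EuclideanSpace ℝ (Fin d) → ℝ)
    (x : EuclideanSpace ℝ (Fin d)) : ℝ :=
  (∫ y, f y * min 1 (ρ y / ρ x) ∂(unifK K)) +
    (1 - ∫ y, min 1 (ρ y / ρ x) ∂(unifK K)) * f x


lemma min_kernel_aux {X : Type*} [MeasurableSpace X] (μ : Measure X) [IsFiniteMeasure μ]
    (ρ f : X → ℝ) (hρ0 : ∀ z, 0 ≤ ρ z) (hρm : Measurable ρ) (hρi : Integrable ρ μ)
    (hf : Measurable f) (C : ℝ) (hC : ∀ y, |f y| ≤ C) :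
    Integrable (fun x => ∫ y, f x * f y * min (ρ x) (ρ y) ∂μ) μ ∧
    0 ≤ ∫ x, ∫ y, f x * f y * min (ρ x) (ρ y) ∂μ ∂μ := by
  have hG : Integrable (fun p : X × X => f p.1 * f p.2 * min (ρ p.1) (ρ p.2)) (μ.prod μ) := by
    have h1 : Integrable (fun p : X × X => min (ρ p.1) (ρ p.2)) (μ.prod μ) :=
      (hρi.comp_fst μ).inf (hρi.comp_snd μ)
    refine h1.bdd_mul (c := C * C) (by fun_prop) (Filter.Eventually.of_forall fun p => ?_)
    rw [Real.norm_eq_abs, abs_mul]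
    exact mul_le_mul (hC _) (hC _) (abs_nonneg _) ((abs_nonneg _).trans (hC p.1))
  refine ⟨hG.integral_prod_left, ?_⟩
  rw [← integral_prod _ hG]
  let u : X → ℝ → ℝ := fun x t => if t < ρ x then f x else 0
  have hu : Measurable (fun q : X × ℝ => u q.1 q.2) := by
    refine Measurable.ite (measurableSet_lt (by fun_prop) (by fun_prop)) (by fun_prop) (by fun_prop)
  have key : ∀ (c : ℝ) (p : X × X), (fun t : ℝ => if t < ρ p.1 ∧ t < ρ p.2 then c else 0)
      = (Set.Iio (min (ρ p.1) (ρ p.2))).indicator (fun _ => c) := by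
    intro c p
    funext t
    simp [Set.indicator, lt_min_iff]
  have key2 : ∀ (c : ℝ) (p : X × X), ∫ t in Set.Ioi (0:ℝ), 
      (if t < ρ p.1 ∧ t < ρ p.2 then c else 0) = c * min (ρ p.1) (ρ p.2) := by
    intro c p
    rw [key, setIntegral_indicator measurableSet_Iio, Set.Ioi_inter_Iio, setIntegral_const]
    rw [Measure.real, Real.volume_Ioo, sub_zero,
      ENNReal.toReal_ofReal (le_min (hρ0 p.1) (hρ0 p.2)), smul_eq_mul, mul_comm]
  have huu : ∀ (p : X × X) (t : ℝ), u p.1 t * u p.2 t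
      = if t < ρ p.1 ∧ t < ρ p.2 then f p.1 * f p.2 else 0 := by
    intro p t
    by_cases h1 : t < ρ p.1 <;> by_cases h2 : t < ρ p.2 <;> simp [u, h1, h2]
  have hm : Measurable (fun q : (X × X) × ℝ => u q.1.1 q.2 * u q.1.2 q.2) :=
    (hu.comp (by fun_prop : Measurable fun q : (X × X) × ℝ => (q.1.1, q.2))).mul
      (hu.comp (by fun_prop : Measurable fun q : (X × X) × ℝ => (q.1.2, q.2)))
  have hI : Integrable (fun q : (X × X) × ℝ => u q.1.1 q.2 * u q.1.2 q.2)
      ((μ.prod μ).prod (volume.restrict (Set.Ioi (0:ℝ)))) := by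
    rw [integrable_prod_iff hm.aestronglyMeasurable]
    constructor
    · refine Filter.Eventually.of_forall fun p => ?_
      simp only [huu]
      rw [key, integrable_indicator_iff measurableSet_Iio]
      refine integrableOn_const ?_
      rw [Measure.restrict_apply measurableSet_Iio, Set.inter_comm, Set.Ioi_inter_Iio]
      simp
    · refine hG.norm.congr (Filter.Eventually.of_forall fun p => ?_)
      have : ∀ t, ‖u p.1 t * u p.2 t‖ = if t < ρ p.1 ∧ t < ρ p.2 then ‖f p.1 * f p.2‖ else 0 := by
        intro t
        rw [huu]
        split_ifs <;> simp
      simp only [this]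
      rw [key2, norm_mul (f p.1 * f p.2), Real.norm_of_nonneg (le_min (hρ0 p.1) (hρ0 p.2))]
  have e : ∀ p : X × X, f p.1 * f p.2 * min (ρ p.1) (ρ p.2)
      = ∫ t in Set.Ioi (0:ℝ), u p.1 t * u p.2 t := by
    intro p
    simp only [huu]
    rw [key2]
  simp only [e]
  rw [integral_integral_swap (f := fun (p : X × X) (t : ℝ) => u p.1 t * u p.2 t) hI]
  refine integral_nonneg fun t => ?_
  change 0 ≤ ∫ p : X × X, u p.1 t * u p.2 t ∂(μ.prod μ)
  rw [integral_prod_mul (fun x => u x t) (fun x => u x t)]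
  exact mul_self_nonneg _

/-- Positivity of the independent Metropolis algorithm: with the
constant proposal kernel `B(x,·) = U_0(·)`, the uniform distribution on `K`, the
independent Metropolis operator is positive on `L₂(π)`:
`∫_K Mf(x) f(x) dπ(x) ≥ 0` for every bounded measurable `f : K → ℝ`. -/
theorem indepMetropolis_positive {d : ℕ}
    (K : Set (EuclideanSpace ℝ (Fin d)))
    (hKbd : Bornology.IsBounded K) (hK : MeasurableSet K)
    (hKint : (interior K).Nonempty)
    (ρ : EuclideanSpace ℝ (Fin d) → ℝ) (hρ0 : ∀ z, 0 ≤ ρ z)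
    (hρK : ∀ x ∈ K, 0 < ρ x)
    (hρmeas : Measurable ρ) (hρint : IntegrableOn ρ K volume)
    (hρpos : 0 < ∫ x in K, ρ x)
    (f : EuclideanSpace ℝ (Fin d) → ℝ)
    (hfmeas : Measurable f) (hfbd : ∃ C : ℝ, ∀ y, |f y| ≤ C) :
    0 ≤ ∫ x, indepMetropolisOp K ρ f x * f x ∂(piMeasure K ρ) := by
  obtain ⟨C, hC⟩ := hfbd
  have hfin : volume K ≠ ⊤ := hKbd.measure_lt_top.ne
  have hpos : volume K ≠ 0 :=
    ((isOpen_interior.measure_pos volume hKint).trans_le (measure_mono interior_subset)).ne'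
  haveI : IsFiniteMeasure (volume.restrict K) := ⟨by simpa using hfin.lt_top⟩
  haveI : IsProbabilityMeasure (unifK K) := ⟨by
    simp [unifK, ENNReal.inv_mul_cancel hpos hfin]⟩
  obtain ⟨hI, hN⟩ := min_kernel_aux (volume.restrict K) ρ f hρ0 hρmeas hρint hfmeas C hC
  unfold piMeasure
  rw [integral_smul_measure, integral_withDensity_eq_integral_toReal_smul
    (by fun_prop) (by simp)]
  refine smul_nonneg ENNReal.toReal_nonneg ?_
  by_cases h : Integrable (fun x => (ENNReal.ofReal (ρ x)).toReal •
      (indepMetropolisOp K ρ f x * f x)) (volume.restrict K)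
  swap
  · rw [integral_undef h]
  have hc : 0 ≤ ((volume K)⁻¹).toReal := ENNReal.toReal_nonneg
  refine (mul_nonneg hc hN).trans ?_
  rw [← integral_const_mul]
  refine integral_mono_ae (hI.const_mul _) h ?_
  filter_upwards [ae_restrict_mem hK] with x hx
  have hx0 := hρK x hx
  have hα : ∫ y, min 1 (ρ y / ρ x) ∂(unifK K) ≤ 1 := by
    have hb : ∀ y, ‖min 1 (ρ y / ρ x)‖ ≤ 1 := fun y => by
      rw [Real.norm_of_nonneg (le_min zero_le_one (div_nonneg (hρ0 y) hx0.le))]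
      exact min_le_left _ _
    have := norm_integral_le_of_norm_le_const (μ := unifK K) (Filter.Eventually.of_forall hb)
    simp only [probReal_univ, mul_one] at this
    exact (le_abs_self _).trans this
  have h1 : ((volume K)⁻¹).toReal * ∫ y in K, f x * f y * min (ρ x) (ρ y)
      = ρ x * ((∫ y, f y * min 1 (ρ y / ρ x) ∂(unifK K)) * f x) := by
    unfold unifK
    rw [integral_smul_measure, smul_eq_mul]
    have : ∀ y, f x * f y * min (ρ x) (ρ y) = (ρ x * f x) * (f y * min 1 (ρ y / ρ x)) := by
      intro y
      have : min (ρ x) (ρ y) = ρ x * min 1 (ρ y / ρ x) := by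
        rw [mul_min_of_nonneg _ _ hx0.le, mul_one, mul_div_cancel₀ _ hx0.ne']
      rw [this]; ring
    simp only [this]
    rw [integral_const_mul]
    ring
  simp only [smul_eq_mul, ENNReal.toReal_ofReal hx0.le]
  rw [h1]
  refine mul_le_mul_of_nonneg_left ?_ hx0.le
  unfold indepMetropolisOp
  nlinarith [mul_nonneg (sub_nonneg.2 hα) (mul_self_nonneg (f x))]
end
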